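/- arXiv:1407.7274 — 7 statements merged into one kernel-verified Lean document; each statement's English description precedes it below -/
import Mathlib

section
/- If R ⊆ α × β and S ⊆ β × γ are difunctional relations with R⁻¹ ∘ R = S ∘ S⁻¹, then the composition R ∘ S ⊆ α × γ is difunctional. (Paper's Lemma (G2 for Types), in the base case of point types.) -/
/-- The converse of a relation `R ⊆ α × β`. -/
def rconv {α β : Type*} (R : Set (α × β)) : Set (β × α) := {p | (p.2, p.1) ∈ R}

/-- Composition of relations `R ⊆ α × β` and `S ⊆ β × γ`. -/
def rcomp {α β γ : Type*} (R : Set (α × β)) (S : Set (β × γ)) : Set (α × γ) :=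
  {p | ∃ j, (p.1, j) ∈ R ∧ (j, p.2) ∈ S}

/-- A relation is difunctional when `R ∘ R⁻¹ ∘ R ⊆ R`, i.e.
`(i,j) ∈ R`, `(k,j) ∈ R`, `(k,l) ∈ R` imply `(i,l) ∈ R`. -/
def Difunctional {α β : Type*} (R : Set (α × β)) : Prop :=
  ∀ ⦃i j k l⦄, (i, j) ∈ R → (k, j) ∈ R → (k, l) ∈ R → (i, l) ∈ R

/-- (G2 for Types), base case of point types: the composition of difunctional
relations with `Right(R) = Left(S)` is difunctional. -/
theorem stmt1 {α β γ : Type*} (R : Set (α × β)) (S : Set (β × γ))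
    (hR : Difunctional R) (hS : Difunctional S)
    (hdef : rcomp (rconv R) R = rcomp S (rconv S)) :
    Difunctional (rcomp R S) := by
  rintro i j k l ⟨a, hia, haj⟩ ⟨b, hkb, hbj⟩ ⟨c, hkc, hcl⟩
  have h : (a, b) ∈ rcomp S (rconv S) := ⟨j, haj, hbj⟩
  rw [← hdef] at h
  obtain ⟨m, hma, hmb⟩ := h
  exact ⟨c, hR (hR hia hma hmb) hkb hkc, hcl⟩
end

section
/- If R ⊆ α × β and S ⊆ β × γ are difunctional relations with R⁻¹ ∘ R = S ∘ S⁻¹, then Left(R ∘ S) = Left(R) and Right(R ∘ S) = Right(S); that is, (R ∘ S) ∘ (R ∘ S)⁻¹ = R ∘ R⁻¹ and (R ∘ S)⁻¹ ∘ (R ∘ S) = S⁻¹ ∘ S. (Paper's Lemma (G4 for Types), in the base case of point types.) -/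
/-- (G4 for Types), base case of point types: `Left(R ∘ S) = Left(R)` and
`Right(R ∘ S) = Right(S)`. -/
theorem stmt2 {α β γ : Type*} (R : Set (α × β)) (S : Set (β × γ))
    (hR : Difunctional R) (hS : Difunctional S)
    (hdef : rcomp (rconv R) R = rcomp S (rconv S)) :
    rcomp (rcomp R S) (rconv (rcomp R S)) = rcomp R (rconv R) ∧
      rcomp (rconv (rcomp R S)) (rcomp R S) = rcomp (rconv S) S := by
  have h : ∀ a b, (∃ i, (i, a) ∈ R ∧ (i, b) ∈ R) ↔ (∃ k, (a, k) ∈ S ∧ (b, k) ∈ S) := by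
    intro a b
    exact Set.ext_iff.1 hdef (a, b)
  constructor
  · ext ⟨x, y⟩
    constructor
    · rintro ⟨k, ⟨a, hxa, hak⟩, ⟨b, hyb, hbk⟩⟩
      obtain ⟨i, hia, hib⟩ := (h a b).2 ⟨k, hak, hbk⟩
      exact ⟨b, hR hxa hia hib, hyb⟩
    · rintro ⟨a, hxa, hya⟩
      obtain ⟨k, hk, -⟩ := (h a a).1 ⟨x, hxa, hxa⟩
      exact ⟨k, ⟨a, hxa, hk⟩, ⟨a, hya, hk⟩⟩
  · ext ⟨x, y⟩
    constructor
    · rintro ⟨i, ⟨a, hia, hax⟩, ⟨b, hib, hby⟩⟩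
      obtain ⟨k, hak, hbk⟩ := (h a b).1 ⟨i, hia, hib⟩
      exact ⟨b, hS hbk hak hax, hby⟩
    · rintro ⟨a, hax, hay⟩
      obtain ⟨i, hi, -⟩ := (h a a).2 ⟨x, hax, hax⟩
      exact ⟨i, ⟨a, hi, hax⟩, ⟨a, hi, hay⟩⟩
end

section
/- If R ⊆ α × β and S ⊆ β × γ are difunctional relations with R⁻¹ ∘ R = S ∘ S⁻¹, then R⁻¹ ∘ R ∘ S = S and R ∘ S ∘ S⁻¹ = R. (Paper's Lemma (G6 for Types), in the base case of point types.) -/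
/-- (G6 for Types), base case of point types: `R⁻¹ ∘ R ∘ S = S` and
`R ∘ S ∘ S⁻¹ = R`. -/
theorem stmt3 {α β γ : Type*} (R : Set (α × β)) (S : Set (β × γ))
    (hR : Difunctional R) (hS : Difunctional S)
    (hdef : rcomp (rconv R) R = rcomp S (rconv S)) :
    rcomp (rcomp (rconv R) R) S = S ∧ rcomp (rcomp R S) (rconv S) = R := by
  have key : ∀ a b, (∃ i, (i, a) ∈ R ∧ (i, b) ∈ R) ↔ ∃ k, (a, k) ∈ S ∧ (b, k) ∈ S := by
    intro a b
    exact Set.ext_iff.mp hdef (a, b)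
  constructor
  · rw [hdef]
    ext ⟨a, c⟩
    constructor
    · rintro ⟨b, ⟨k, h1, h2⟩, h3⟩
      exact hS h1 h2 h3
    · intro h
      exact ⟨a, ⟨c, h, h⟩, h⟩
  · ext ⟨a, b⟩
    constructor
    · rintro ⟨k, ⟨j, h1, h2⟩, h3⟩
      obtain ⟨i, h4, h5⟩ := (key j b).mpr ⟨k, h2, h3⟩
      exact hR h1 h4 h5
    · intro h
      obtain ⟨k, h1, h2⟩ := (key b b).mp ⟨a, h, h⟩
      exact ⟨k, ⟨b, h, h1⟩, h2⟩
end

section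
/- Let R ⊆ α × β and S ⊆ β × γ be difunctional relations with R⁻¹ ∘ R = S ∘ S⁻¹. Let (i,j), (i',j') ∈ R and (j,k), (j',k') ∈ S (so the compositions (i,k) and (i',k') belong to R ∘ S). Then the following are equivalent: (i,k) ≃_{R∘S} (i',k'); (i,j) ≃_R (i',j'); (j,k) ≃_S (j',k'). (Paper's Lemma (≃.B), in the base case of point types.) -/
/-- The paper's relation `x ≃_R y` on elements of a point type `R`:
`(i,j) ≃_R (k,l)` iff `(k,j) ∈ R`. -/
def simeqP {α β : Type*} (R : Set (α × β)) (p q : α × β) : Prop := (q.1, p.2) ∈ R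

/-- (≃.B), base case of point types. -/
theorem stmt6 {α β γ : Type*} (R : Set (α × β)) (S : Set (β × γ))
    (hR : Difunctional R) (hS : Difunctional S)
    (hdef : rcomp (rconv R) R = rcomp S (rconv S))
    (i i' : α) (j j' : β) (k k' : γ)
    (h1 : (i, j) ∈ R) (h2 : (i', j') ∈ R) (h3 : (j, k) ∈ S) (h4 : (j', k') ∈ S) :
    (simeqP (rcomp R S) (i, k) (i', k') ↔ simeqP R (i, j) (i', j')) ∧
      (simeqP R (i, j) (i', j') ↔ simeqP S (j, k) (j', k')) := by
  have key : ∀ a b, (∃ x, (x, a) ∈ R ∧ (x, b) ∈ R) ↔ ∃ y, (a, y) ∈ S ∧ (b, y) ∈ S := by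
    intro a b
    exact Set.ext_iff.mp hdef (a, b)
  refine ⟨⟨?_, fun h => ⟨j, h, h3⟩⟩, ?_, ?_⟩
  · rintro ⟨m, hm, hmk⟩
    obtain ⟨x, hx, hx'⟩ := (key m j).2 ⟨k, hmk, h3⟩
    exact hR hm hx hx'
  · intro h
    obtain ⟨y, hy, hy'⟩ := (key j' j).1 ⟨i', h2, h⟩
    exact hS hy hy' h3
  · intro h
    obtain ⟨x, hx, hx'⟩ := (key j' j).2 ⟨k, h, h3⟩
    exact hR h2 hx hx'
end

section
/- A relation R ⊆ α × β is difunctional if and only if it is a disjoint union of rectangles: there exist an index type M and families A : M → Set α and B : M → Set β such that each A m and each B m is nonempty, the sets A m are pairwise disjoint, the sets B m are pairwise disjoint, and R = ⋃_m (A m ×ˢ B m). (This is the paper's claim that each equivalence class of a point type is a cross product of a left index set and a right index set.) -/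
universe u v

/-- A relation is difunctional iff it is a disjoint union of (nonempty)
rectangles. -/
theorem stmt9 {α : Type u} {β : Type v} (R : Set (α × β)) :
    Difunctional R ↔
      ∃ (M : Type (max u v)) (A : M → Set α) (B : M → Set β),
        (∀ m, (A m).Nonempty) ∧ (∀ m, (B m).Nonempty) ∧
        (∀ m m', m ≠ m' → Disjoint (A m) (A m')) ∧
        (∀ m m', m ≠ m' → Disjoint (B m) (B m')) ∧
        R = ⋃ m, A m ×ˢ B m := by
  constructor
  · intro h
    refine ⟨{S : Set α × Set β // ∃ i j, (i, j) ∈ R ∧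
      S = ({a | (a, j) ∈ R}, {b | (i, b) ∈ R})}, fun m => m.1.1, fun m => m.1.2, ?_, ?_, ?_, ?_, ?_⟩
    · rintro ⟨_, i, j, hij, rfl⟩
      exact ⟨i, hij⟩
    · rintro ⟨_, i, j, hij, rfl⟩
      exact ⟨j, hij⟩
    · rintro ⟨_, i, j, hij, rfl⟩ ⟨_, i', j', hij', rfl⟩ hne
      rw [Set.disjoint_left]
      intro a (ha : (a, j) ∈ R) (ha' : (a, j') ∈ R)
      apply hne
      apply Subtype.ext
      refine Prod.ext (Set.ext fun x => ⟨fun hx => h hx ha ha', fun hx => h hx ha' ha⟩)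
        (Set.ext fun y => ⟨fun hy => h hij' (h hij ha ha') hy,
          fun hy => h (h hij ha ha') hij' hy⟩)
    · rintro ⟨_, i, j, hij, rfl⟩ ⟨_, i', j', hij', rfl⟩ hne
      rw [Set.disjoint_left]
      intro b (hb : (i, b) ∈ R) (hb' : (i', b) ∈ R)
      have h1 : (i, j') ∈ R := h hb hb' hij'
      apply hne
      apply Subtype.ext
      refine Prod.ext (Set.ext fun x => ⟨fun hx => h hx hij h1, fun hx => h hx h1 hij⟩)
        (Set.ext fun y => ⟨fun hy => h hb' hb hy, fun hy => h hb hb' hy⟩)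
    · ext ⟨x, y⟩
      simp only [Set.mem_iUnion, Set.mem_prod]
      constructor
      · intro hxy
        exact ⟨⟨_, x, y, hxy, rfl⟩, hxy, hxy⟩
      · rintro ⟨⟨_, i, j, hij, rfl⟩, hx, hy⟩
        exact h hx hij hy
  · rintro ⟨M, A, B, -, -, hA, hB, rfl⟩ i j k l h1 h2 h3
    simp only [Set.mem_iUnion, Set.mem_prod] at *
    obtain ⟨m, hi, hj⟩ := h1
    obtain ⟨n, hk, hj'⟩ := h2
    obtain ⟨p, hk', hl⟩ := h3
    have e1 : m = n := by
      by_contra hne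
      exact Set.disjoint_left.1 (hB _ _ hne) hj hj'
    have e2 : n = p := by
      by_contra hne
      exact Set.disjoint_left.1 (hA _ _ hne) hk hk'
    subst e1 e2
    exact ⟨_, hi, hl⟩
end

section
/- On the collection of difunctional relations on a type α (difunctional subsets of α × α), the relation R ∼ S, defined to hold when there exists a difunctional relation T ⊆ α × α with R⁻¹ ∘ R = T ∘ T⁻¹ and T⁻¹ ∘ T = S ∘ S⁻¹ (i.e. the triple composition R ∘ T ∘ S is defined), is an equivalence relation. (Paper's Lemma (∼.A), in the base case of point types.) -/
/-- The paper's relation `R ∼ S`: there is a difunctional `T` with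
`Right(R) = Left(T)` and `Right(T) = Left(S)`, i.e. `R ∘ T ∘ S` is defined. -/
def simRel {α : Type*} (R S : Set (α × α)) : Prop :=
  ∃ T : Set (α × α), Difunctional T ∧
    rcomp (rconv R) R = rcomp T (rconv T) ∧ rcomp (rconv T) T = rcomp S (rconv S)

theorem my_conv_conv {α β : Type*} (R : Set (α × β)) : rconv (rconv R) = R := rfl

theorem my_conv_difun {α β : Type*} {R : Set (α × β)} (h : Difunctional R) :
    Difunctional (rconv R) := fun _ _ _ _ h1 h2 h3 => h h3 h2 h1

theorem my_conv_comp {α β γ : Type*} (A : Set (α × β)) (B : Set (β × γ)) :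
    rconv (rcomp A B) = rcomp (rconv B) (rconv A) := by
  ext ⟨x, y⟩
  exact ⟨fun ⟨j, a, b⟩ => ⟨j, b, a⟩, fun ⟨j, a, b⟩ => ⟨j, b, a⟩⟩

theorem my_assoc {α β γ δ : Type*} (A : Set (α × β)) (B : Set (β × γ)) (C : Set (γ × δ)) :
    rcomp (rcomp A B) C = rcomp A (rcomp B C) := by
  ext ⟨x, y⟩
  exact ⟨fun ⟨j, ⟨k, a, b⟩, c⟩ => ⟨k, a, j, b, c⟩, fun ⟨k, a, j, b, c⟩ => ⟨j, ⟨k, a, b⟩, c⟩⟩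

theorem my_difun_iff {α β : Type*} {R : Set (α × β)} :
    Difunctional R ↔ rcomp R (rcomp (rconv R) R) = R := by
  constructor
  · intro h
    ext ⟨x, y⟩
    exact ⟨fun ⟨j, a, k, b, c⟩ => h a b c, fun a => ⟨y, a, x, a, a⟩⟩
  · intro h i j k l a b c
    rw [← h]
    exact ⟨j, a, k, b, c⟩

theorem my_left {α β γ : Type*} {A : Set (α × β)} {B : Set (β × γ)} (hA : Difunctional A)
    (h : rcomp (rconv A) A = rcomp B (rconv B)) :
    rcomp (rcomp A B) (rconv (rcomp A B)) = rcomp A (rconv A) := by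
  rw [my_conv_comp, my_assoc, ← my_assoc B, ← h, ← my_assoc A, my_difun_iff.1 hA]

theorem my_right {α β γ : Type*} {A : Set (α × β)} {B : Set (β × γ)} (hB : Difunctional B)
    (h : rcomp (rconv A) A = rcomp B (rconv B)) :
    rcomp (rconv (rcomp A B)) (rcomp A B) = rcomp (rconv B) B := by
  rw [my_conv_comp, my_assoc, ← my_assoc (rconv A), h, my_assoc B, my_difun_iff.1 hB]

theorem my_comp_difun {α β γ : Type*} {A : Set (α × β)} {B : Set (β × γ)}
    (hA : Difunctional A) (hB : Difunctional B)
    (h : rcomp (rconv A) A = rcomp B (rconv B)) : Difunctional (rcomp A B) := by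
  rw [my_difun_iff, my_right hB h, my_assoc, my_difun_iff.1 hB]

theorem my_three {α : Type*} {A B C : Set (α × α)}
    (hA : Difunctional A) (hB : Difunctional B) (hC : Difunctional C)
    (h : rcomp (rconv A) A = rcomp B (rconv B)) (h' : rcomp (rconv B) B = rcomp C (rconv C)) :
    ∃ T : Set (α × α), Difunctional T ∧
      rcomp A (rconv A) = rcomp T (rconv T) ∧ rcomp (rconv T) T = rcomp (rconv C) C := by
  have h2 := (my_right hB h).trans h'
  have hAB := my_comp_difun hA hB h
  exact ⟨rcomp (rcomp A B) C, my_comp_difun hAB hC h2,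
    ((my_left hAB h2).trans (my_left hA h)).symm, my_right hC h2⟩

/-- (∼.A), base case of point types: `∼` is an equivalence relation on the
difunctional relations on `α`. -/
theorem stmt11 {α : Type*} :
    Equivalence (fun R S : {R : Set (α × α) // Difunctional R} => simRel R.1 S.1) := by
  refine ⟨fun R => ⟨rconv R.1, my_conv_difun R.2, rfl, rfl⟩, ?_, ?_⟩
  · rintro ⟨R, hR⟩ ⟨S, hS⟩ ⟨T, hT, h1, h2⟩
    exact my_three (my_conv_difun hS) (my_conv_difun hT) (my_conv_difun hR) h2.symm h1.symm
  · rintro ⟨R, hR⟩ ⟨S, hS⟩ ⟨V, hV⟩ ⟨T, hT, h1, h2⟩ ⟨U, hU, h3, h4⟩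
    obtain ⟨W, hW, h5, h6⟩ := my_three hT hS hU h2 h3
    exact ⟨W, hW, h1.trans h5, h6.trans h4⟩
end

section
/- One cannot name a node of the complete graph: for every natural number n ≥ 2, there is no function e assigning to each type X (in a fixed universe) with exactly n elements an element e(X) : X such that for all such types X, Y and every bijection g : X ≃ Y one has g (e(X)) = e(Y). -/
universe u

/-- One cannot name a node of the complete graph: for `n ≥ 2` there is no
assignment of an element `e X : X` to every type `X` with exactly `n` elements
that commutes with all bijections between such types. -/
theorem stmt18 (n : ℕ) (hn : 2 ≤ n) :
    ¬ ∃ e : ∀ (X : Type u) [Fintype X], Fintype.card X = n → X,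
      ∀ (X Y : Type u) [Fintype X] [Fintype Y]
        (hX : Fintype.card X = n) (hY : Fintype.card Y = n) (g : X ≃ Y),
        g (e X hX) = e Y hY := by
  rintro ⟨e, he⟩
  classical
  have hX : Fintype.card (ULift.{u} (Fin n)) = n := by simp
  have : Nontrivial (ULift.{u} (Fin n)) :=
    Fintype.one_lt_card_iff_nontrivial.mp (by omega)
  obtain ⟨y, hy⟩ := exists_ne (e (ULift.{u} (Fin n)) hX)
  have h := he _ _ hX hX (Equiv.swap (e (ULift.{u} (Fin n)) hX) y)
  rw [Equiv.swap_apply_left] at h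
  exact hy h
end
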